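/- Let r > 1 be a real number and let s ≥ 2 be an integer. Then for every positive integer M there exists a number field K with [K:ℚ] = s such that the closure of σ_{r,K}(I_K) has at least M connected components; that is, the supremum of C_{r,K} over all degree-s extensions K/ℚ is infinite. -/

import Mathlib

open NumberField

/-- The ideal divisor function `σ_{r,K}(I) = ∑_{J ∣ I} N(J)^{-r}`. -/
noncomputable def sigmaK (K : Type*) [Field K] [NumberField K] (r : ℝ)
    (I : Ideal (𝓞 K)) : ℝ :=
  ∑' J : {J : Ideal (𝓞 K) // J ∣ I}, (Ideal.absNorm (J : Ideal (𝓞 K)) : ℝ) ^ (-r)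

open Filter Module Polynomial UniqueFactorizationMonoid

/-!
Write `N` for the absolute norm. If `q` is the norm of a prime ideal and the prime ideals of norm
greater than `q` are sparse, then no value of `σ_{r,K}` lies strictly between `1 + q ^ (-r) / 2` and
`1 + q ^ (-r)`: an ideal divisible by a prime of norm at most `q` has value at least
`1 + q ^ (-r)`, while for any other `I` the bound `σ_{r,K}(I) ≤ exp (2 ∑_{P ∣ I} N(P) ^ (-r))`
gives a value below the gap. Distinct such `q` separate distinct components of the closure.

To get many such `q` in degree `s`, take a rapidly growing chain of rational primes
`X < q 0 < ⋯ < q (M - 1) ≤ B` and, by the Chinese remainder theorem, a monic integer polynomial of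
degree `s` that is Eisenstein at the primes up to `X` and at every `q i`, and irreducible modulo
every other prime up to `B`. In the field it defines the former primes are totally ramified, the
`q i` being norms of prime ideals. The latter are inert, so their primes have norm `p ^ s` with
`s ≥ 2`, and `X`, the growth of the chain and `B` can be chosen to make them, the later `q j` and
the primes beyond `B` negligible.
-/

section Topology

theorem connectedComponents_mk_ne_of_gap {X : Type*} [TopologicalSpace X] [LinearOrder X]
    [OrderClosedTopology X] {A : Set X} {x y : A} {c : X} (hc : c ∉ A) (hxc : ↑x < c)
    (hcy : c < ↑y) : ConnectedComponents.mk x ≠ ConnectedComponents.mk y := by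
  intro hxy
  have hconn : IsPreconnected (Subtype.val '' connectedComponent y) :=
    isPreconnected_connectedComponent.image _ continuous_subtype_val.continuousOn
  have hx : x ∈ connectedComponent y := ConnectedComponents.coe_eq_coe'.1 hxy
  obtain ⟨z, -, rfl⟩ := hconn.Icc_subset ⟨x, hx, rfl⟩ ⟨y, mem_connectedComponent, rfl⟩
    ⟨hxc.le, hcy.le⟩
  exact hc z.2

end Topology

section Elementary

theorem exp_le_one_add_two_mul {x : ℝ} (h0 : 0 ≤ x) (h1 : x ≤ 1) : Real.exp x ≤ 1 + 2 * x := by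
  have h := (abs_le.1 (Real.abs_exp_sub_one_sub_id_le (abs_le.2 ⟨by linarith, h1⟩))).2
  nlinarith

theorem geom_sum_le_one_add_two_mul {x : ℝ} (h0 : 0 ≤ x) (h1 : x ≤ 1 / 2) (n : ℕ) :
    ∑ k ∈ Finset.range n, x ^ k ≤ 1 + 2 * x := by
  have hx : x < 1 := by linarith
  calc ∑ k ∈ Finset.range n, x ^ k ≤ ∑' k, x ^ k :=
        (summable_geometric_of_lt_one h0 hx).sum_le_tsum _ fun k _ ↦ pow_nonneg h0 k
    _ = (1 - x)⁻¹ := tsum_geometric_of_lt_one h0 hx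
    _ ≤ 1 + 2 * x := by
        rw [inv_le_iff_one_le_mul₀ (by linarith)]
        nlinarith

end Elementary

section Sigma

variable {K : Type*} [Field K] [NumberField K] {r : ℝ}

theorem sigmaK_eq_sum {I : Ideal (𝓞 K)} {D : Finset (Ideal (𝓞 K))} (hD : ∀ J, J ∈ D ↔ J ∣ I) :
    sigmaK K r I = ∑ J ∈ D, (Ideal.absNorm J : ℝ) ^ (-r) := by
  rw [← Finset.tsum_subtype]
  exact (Equiv.subtypeEquivRight fun J ↦ (hD J).symm).tsum_eq
    fun J : D ↦ (Ideal.absNorm (J : Ideal (𝓞 K)) : ℝ) ^ (-r)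

theorem exists_finset_mem_iff_dvd {I : Ideal (𝓞 K)} (hI : I ≠ 0) :
    ∃ D : Finset (Ideal (𝓞 K)), ∀ J, J ∈ D ↔ J ∣ I := by
  let _ : Fintype {J // J ∣ I} := fintypeSubtypeDvd I hI
  have hfin : {J | J ∣ I}.Finite := Set.finite_coe_iff.1 (Finite.of_fintype {J // J ∣ I})
  exact ⟨hfin.toFinset, fun J ↦ hfin.mem_toFinset⟩

theorem sigmaK_nonneg (I : Ideal (𝓞 K)) : 0 ≤ sigmaK K r I :=
  tsum_nonneg fun _ ↦ by positivity

theorem sigmaK_one : sigmaK K r 1 = 1 := by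
  have hD (J : Ideal (𝓞 K)) : J ∈ ({1} : Finset (Ideal (𝓞 K))) ↔ J ∣ 1 := by
    rw [Finset.mem_singleton, ← isUnit_iff_dvd_one, isUnit_iff_eq_one]
  rw [sigmaK_eq_sum hD, Finset.sum_singleton, map_one, Nat.cast_one, Real.one_rpow]

theorem sigmaK_le_of_dvd {I J : Ideal (𝓞 K)} (hJ : J ≠ 0) (hIJ : I ∣ J) :
    sigmaK K r I ≤ sigmaK K r J := by
  obtain ⟨D, hD⟩ := exists_finset_mem_iff_dvd (ne_zero_of_dvd_ne_zero hJ hIJ)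
  obtain ⟨E, hE⟩ := exists_finset_mem_iff_dvd hJ
  rw [sigmaK_eq_sum hD, sigmaK_eq_sum hE]
  refine Finset.sum_le_sum_of_subset_of_nonneg (fun L hL ↦ ?_) fun _ _ _ ↦ by positivity
  exact (hE L).2 (((hD L).1 hL).trans hIJ)

theorem sigmaK_mul_le {I J : Ideal (𝓞 K)} (hI : I ≠ 0) (hJ : J ≠ 0) :
    sigmaK K r (I * J) ≤ sigmaK K r I * sigmaK K r J := by
  classical
  obtain ⟨D, hD⟩ := exists_finset_mem_iff_dvd hI
  obtain ⟨E, hE⟩ := exists_finset_mem_iff_dvd hJ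
  obtain ⟨F, hF⟩ := exists_finset_mem_iff_dvd (mul_ne_zero hI hJ)
  have hsub : F ⊆ (D ×ˢ E).image fun x ↦ x.1 * x.2 := fun L hL ↦ by
    obtain ⟨A, B, hA, hB, rfl⟩ := exists_dvd_and_dvd_of_dvd_mul ((hF L).1 hL)
    exact Finset.mem_image.2 ⟨(A, B), Finset.mk_mem_product ((hD A).2 hA) ((hE B).2 hB), rfl⟩
  rw [sigmaK_eq_sum hD, sigmaK_eq_sum hE, sigmaK_eq_sum hF]
  calc ∑ L ∈ F, (Ideal.absNorm L : ℝ) ^ (-r)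
      ≤ ∑ L ∈ (D ×ˢ E).image fun x ↦ x.1 * x.2, (Ideal.absNorm L : ℝ) ^ (-r) :=
        Finset.sum_le_sum_of_subset_of_nonneg hsub fun _ _ _ ↦ by positivity
    _ ≤ ∑ x ∈ D ×ˢ E, (Ideal.absNorm (x.1 * x.2) : ℝ) ^ (-r) :=
        Finset.sum_image_le_of_nonneg fun _ _ ↦ by positivity
    _ = (∑ A ∈ D, (Ideal.absNorm A : ℝ) ^ (-r)) * ∑ B ∈ E, (Ideal.absNorm B : ℝ) ^ (-r) := by
        simp_rw [Finset.sum_mul_sum, ← Finset.sum_product', map_mul, Nat.cast_mul,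
          Real.mul_rpow (Nat.cast_nonneg _) (Nat.cast_nonneg _)]

theorem sigmaK_prime_pow {P : Ideal (𝓞 K)} (hP : Prime P) (n : ℕ) :
    sigmaK K r (P ^ n) = ∑ k ∈ Finset.range (n + 1), ((Ideal.absNorm P : ℝ) ^ (-r)) ^ k := by
  classical
  have hD : ∀ J, J ∈ (Finset.range (n + 1)).image (P ^ ·) ↔ J ∣ P ^ n := fun J ↦ by
    simp only [Finset.mem_image, Finset.mem_range, Nat.lt_succ_iff, dvd_prime_pow hP,
      associated_iff_eq, eq_comm]
  have hinj := pow_injective_of_not_isUnit hP.not_isUnit hP.ne_zero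
  rw [sigmaK_eq_sum hD, Finset.sum_image hinj.injOn]
  simp_rw [map_pow, Nat.cast_pow, Real.rpow_pow_comm (Nat.cast_nonneg _)]

theorem sigmaK_prime {P : Ideal (𝓞 K)} (hP : Prime P) :
    sigmaK K r P = 1 + (Ideal.absNorm P : ℝ) ^ (-r) := by
  simpa [Finset.sum_range_succ] using sigmaK_prime_pow (r := r) hP 1

theorem two_le_absNorm {P : Ideal (𝓞 K)} (hP : Prime P) : 2 ≤ Ideal.absNorm P := by
  have h0 : Ideal.absNorm P ≠ 0 := Ideal.absNorm_eq_zero_iff.not.2 hP.ne_zero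
  have h1 : Ideal.absNorm P ≠ 1 :=
    Ideal.absNorm_eq_one_iff.not.2 (Ideal.isPrime_of_prime hP).ne_top
  omega

theorem absNorm_rpow_neg_le_half (hr : 1 ≤ r) {P : Ideal (𝓞 K)} (hP : Prime P) :
    (Ideal.absNorm P : ℝ) ^ (-r) ≤ 1 / 2 := by
  have hN : (2 : ℝ) ≤ Ideal.absNorm P := mod_cast two_le_absNorm hP
  calc (Ideal.absNorm P : ℝ) ^ (-r) ≤ (Ideal.absNorm P : ℝ) ^ (-1 : ℝ) :=
        Real.rpow_le_rpow_of_exponent_le (by linarith) (by linarith)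
    _ ≤ 1 / 2 := by
        rw [Real.rpow_neg_one, one_div]
        exact inv_anti₀ two_pos hN

theorem sigmaK_prime_pow_le_exp (hr : 1 ≤ r) {P : Ideal (𝓞 K)} (hP : Prime P) (n : ℕ) :
    sigmaK K r (P ^ n) ≤ Real.exp (2 * (Ideal.absNorm P : ℝ) ^ (-r)) := by
  rw [sigmaK_prime_pow hP]
  refine (geom_sum_le_one_add_two_mul (by positivity) (absNorm_rpow_neg_le_half hr hP) _).trans ?_
  linarith [Real.add_one_le_exp (2 * (Ideal.absNorm P : ℝ) ^ (-r))]

theorem sigmaK_le_exp_sum_primeFactors (hr : 1 ≤ r) {I : Ideal (𝓞 K)} (hI : I ≠ 0) :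
    sigmaK K r I ≤ Real.exp (2 * ∑ P ∈ primeFactors I, (Ideal.absNorm P : ℝ) ^ (-r)) := by
  induction I using induction_on_coprime with
  | h0 => exact absurd rfl hI
  | h1 hu =>
    obtain rfl := isUnit_iff_eq_one.1 hu
    rw [sigmaK_one, primeFactors_one, Finset.sum_empty, mul_zero, Real.exp_zero]
  | @hpr P n hP =>
    rcases eq_or_ne n 0 with rfl | hn
    · rw [pow_zero, sigmaK_one, primeFactors_one, Finset.sum_empty, mul_zero, Real.exp_zero]
    · have hfac : primeFactors (P ^ n) = {P} := by
        rw [primeFactors_pow _ hn, primeFactors, normalizedFactors_irreducible hP.irreducible]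
        simp
      simpa [hfac] using sigmaK_prime_pow_le_exp hr hP n
  | @hcp I J hIJ ihI ihJ =>
    obtain ⟨hI0, hJ0⟩ := mul_ne_zero_iff.1 hI
    rw [primeFactors_mul_eq_disjUnion hIJ, Finset.sum_disjUnion, mul_add, Real.exp_add]
    exact (sigmaK_mul_le hI0 hJ0).trans
      (mul_le_mul (ihI hI0) (ihJ hJ0) (sigmaK_nonneg J) (Real.exp_nonneg _))

end Sigma

section Gap

variable {K : Type*} [Field K] [NumberField K] {r : ℝ}

variable (K r) in
/-- The prime ideals of norm greater than `q` are sparse at exponent `r`: together they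
contribute much less to the divisor function than one prime ideal of norm `q` would. The
constant `8` is what makes the values of `sigmaK` omit an interval below `1 + q ^ (-r)`. -/
def SparseAbove (q : ℕ) : Prop :=
  ∀ T : Finset (Ideal (𝓞 K)), (∀ P ∈ T, Prime P ∧ q < Ideal.absNorm P) →
    8 * ∑ P ∈ T, (Ideal.absNorm P : ℝ) ^ (-r) ≤ (q : ℝ) ^ (-r)

theorem SparseAbove.sigmaK_le_or_le {q : ℕ} (h : SparseAbove K r q) (hr : 1 ≤ r) (hq : 1 ≤ q)
    {I : Ideal (𝓞 K)} (hI : I ≠ 0) :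
    sigmaK K r I ≤ 1 + (q : ℝ) ^ (-r) / 2 ∨ 1 + (q : ℝ) ^ (-r) ≤ sigmaK K r I := by
  by_cases hsmall : ∃ P ∈ primeFactors I, Ideal.absNorm P ≤ q
  · obtain ⟨P, hPI, hPq⟩ := hsmall
    have hP : Prime P := prime_of_normalized_factor P (mem_primeFactors.1 hPI)
    have hNP : 0 < Ideal.absNorm P := two_pos.trans_le (two_le_absNorm hP)
    right
    calc 1 + (q : ℝ) ^ (-r) ≤ 1 + (Ideal.absNorm P : ℝ) ^ (-r) := by
          gcongr 1 + ?_
          exact Real.rpow_le_rpow_of_nonpos (mod_cast hNP) (mod_cast hPq) (by linarith)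
      _ = sigmaK K r P := (sigmaK_prime hP).symm
      _ ≤ sigmaK K r I :=
          sigmaK_le_of_dvd hI (dvd_of_mem_normalizedFactors (mem_primeFactors.1 hPI))
  · push Not at hsmall
    have hsum := h (primeFactors I) fun P hP ↦
      ⟨prime_of_normalized_factor P (mem_primeFactors.1 hP), hsmall P hP⟩
    have hq1 : (q : ℝ) ^ (-r) ≤ 1 :=
      Real.rpow_le_one_of_one_le_of_nonpos (mod_cast hq) (by linarith)
    have h0 : 0 ≤ ∑ P ∈ primeFactors I, (Ideal.absNorm P : ℝ) ^ (-r) :=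
      Finset.sum_nonneg fun _ _ ↦ by positivity
    left
    calc sigmaK K r I ≤ _ := sigmaK_le_exp_sum_primeFactors hr hI
      _ ≤ _ := exp_le_one_add_two_mul (by linarith) (by linarith)
      _ ≤ 1 + (q : ℝ) ^ (-r) / 2 := by linarith

theorem SparseAbove.disjoint_Ioo_closure {q : ℕ} (h : SparseAbove K r q) (hr : 1 ≤ r)
    (hq : 1 ≤ q) :
    Disjoint (Set.Ioo (1 + (q : ℝ) ^ (-r) / 2) (1 + (q : ℝ) ^ (-r)))
      (closure (sigmaK K r '' {I | I ≠ 0})) := by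
  refine Disjoint.closure_right ?_ isOpen_Ioo
  rw [Set.disjoint_right]
  rintro _ ⟨I, hI, rfl⟩ ⟨hlow, hupp⟩
  rcases h.sigmaK_le_or_le hr hq hI with hle | hle <;> linarith

theorem mk_le_mk_connectedComponents_of_sparseAbove (hr : 1 ≤ r) {ι : Type} {q : ι → ℕ}
    (hinj : Function.Injective q) (hnorm : ∀ i, ∃ P : Ideal (𝓞 K), Prime P ∧ Ideal.absNorm P = q i)
    (hsparse : ∀ i, SparseAbove K r (q i)) :
    Cardinal.mk ι ≤ Cardinal.mk (ConnectedComponents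
      ↥(closure (sigmaK K r '' {I : Ideal (𝓞 K) | I ≠ 0}))) := by
  have hmem (i : ι) : 1 + (q i : ℝ) ^ (-r) ∈ sigmaK K r '' {I : Ideal (𝓞 K) | I ≠ 0} := by
    obtain ⟨P, hP, hPq⟩ := hnorm i
    exact ⟨P, hP.ne_zero, by rw [sigmaK_prime hP, hPq]⟩
  have hq (i : ι) : 1 ≤ q i := by
    obtain ⟨P, hP, hPq⟩ := hnorm i
    exact hPq ▸ one_le_two.trans (two_le_absNorm hP)
  let a (i : ι) : closure (sigmaK K r '' {I : Ideal (𝓞 K) | I ≠ 0}) := ⟨_, subset_closure (hmem i)⟩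
  have hne {i j : ι} (hij : q i < q j) :
      ConnectedComponents.mk (a j) ≠ ConnectedComponents.mk (a i) := by
    have hi : (0 : ℝ) < q i := mod_cast hq i
    have hpos : 0 < (q i : ℝ) ^ (-r) := Real.rpow_pos_of_pos hi _
    have hlt : (q j : ℝ) ^ (-r) < (q i : ℝ) ^ (-r) :=
      Real.rpow_lt_rpow_of_neg hi (mod_cast hij) (by linarith)
    have hgap := (hsparse i).disjoint_Ioo_closure hr (hq i)
    have haj : 1 + (q j : ℝ) ^ (-r) ≤ 1 + (q i : ℝ) ^ (-r) / 2 := by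
      by_contra! hcon
      exact Set.disjoint_left.1 hgap ⟨hcon, by linarith⟩ (a j).2
    refine connectedComponents_mk_ne_of_gap (c := 1 + 3 / 4 * (q i : ℝ) ^ (-r)) ?_ ?_ ?_
    · exact Set.disjoint_left.1 hgap ⟨by linarith, by linarith⟩
    · exact haj.trans_lt (by linarith)
    · exact add_lt_add_right (by linarith) 1
  refine Cardinal.mk_le_of_injective (f := fun i ↦ ConnectedComponents.mk (a i)) fun i j hij ↦ ?_
  rcases lt_trichotomy (q i) (q j) with h | h | h
  · exact absurd hij.symm (hne h)
  · exact hinj h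
  · exact absurd hij (hne h)

end Gap

section PrimesOver

theorem ncard_primesOver_le_finrank {R : Type*} [CommRing R] [IsDomain R] (p : Ideal R) [p.IsPrime]
    (S : Type*) [CommRing S] [Algebra R S] [Module.Finite R S] [Module.Flat R S]
    (hfin : (p.primesOver S).Finite) : (p.primesOver S).ncard ≤ finrank R S := by
  have := hfin.fintype
  rw [← Ideal.sum_ramification_inertia_eq_finrank p S, ← Nat.card_coe_set_eq,
    Nat.card_eq_fintype_card, Fintype.card_eq_sum_ones]
  refine Finset.sum_le_sum fun q _ ↦ ?_
  have := q.2.1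
  exact Nat.mul_pos (Ideal.ramificationIdx_pos _ R) (Ideal.inertiaDeg_pos _ R)

variable {K : Type*} [Field K] [NumberField K]

theorem absNorm_dvd_pow_finrank {I : Ideal (𝓞 K)} {n : ℕ} (h : (n : 𝓞 K) ∈ I) :
    Ideal.absNorm I ∣ n ^ finrank ℚ K := by
  rw [← RingOfIntegers.rank K, ← Ideal.absNorm_span_natCast]
  exact Ideal.absNorm_dvd_absNorm_of_le ((Ideal.span_singleton_le_iff_mem _).2 h)

theorem prime_absNorm_under {P : Ideal (𝓞 K)} (hP : Prime P) :
    (Ideal.absNorm (P.under ℤ)).Prime := by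
  have := Ideal.isPrime_of_prime hP
  have : NeZero P := ⟨hP.ne_zero⟩
  exact Nat.absNorm_under_prime P

theorem card_filter_absNorm_under_le {T : Finset (Ideal (𝓞 K))} (hT : ∀ P ∈ T, Prime P) (p : ℕ) :
    (T.filter fun P ↦ Ideal.absNorm (P.under ℤ) = p).card ≤ finrank ℚ K := by
  rcases Finset.eq_empty_or_nonempty (T.filter fun P ↦ Ideal.absNorm (P.under ℤ) = p) with
    hempty | ⟨Q, hQ⟩
  · simp [hempty]
  have hp : p.Prime := by
    obtain ⟨hQT, rfl⟩ := Finset.mem_filter.1 hQ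
    exact prime_absNorm_under (hT Q hQT)
  have hp' := Nat.prime_iff_prime_int.1 hp
  have : (Ideal.span {(p : ℤ)}).IsPrime := (Ideal.span_singleton_prime hp'.ne_zero).2 hp'
  have : (Ideal.span {(p : ℤ)}).IsMaximal :=
    this.isMaximal (Ideal.span_singleton_eq_bot.not.2 hp'.ne_zero)
  have hfin := IsDedekindDomain.primesOver_finite (Ideal.span {(p : ℤ)}) (𝓞 K)
  calc _ ≤ ((Ideal.span {(p : ℤ)}).primesOver (𝓞 K)).ncard := by
        rw [← Set.ncard_coe_finset]
        refine Set.ncard_le_ncard (fun P hP ↦ ?_) hfin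
        obtain ⟨hPT, rfl⟩ := Finset.mem_filter.1 hP
        exact ⟨Ideal.isPrime_of_prime (hT P hPT), inferInstance⟩
    _ ≤ finrank ℤ (𝓞 K) := ncard_primesOver_le_finrank _ _ hfin
    _ = finrank ℚ K := RingOfIntegers.rank K

theorem sum_absNorm_under_le {T : Finset (Ideal (𝓞 K))} (hT : ∀ P ∈ T, Prime P) {g : ℕ → ℝ}
    (hg : ∀ p, 0 ≤ g p) :
    ∑ P ∈ T, g (Ideal.absNorm (P.under ℤ)) ≤
      finrank ℚ K * ∑ p ∈ T.image fun P ↦ Ideal.absNorm (P.under ℤ), g p := by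
  rw [Finset.sum_comp, Finset.mul_sum]
  refine Finset.sum_le_sum fun p _ ↦ ?_
  rw [nsmul_eq_mul]
  exact mul_le_mul_of_nonneg_right (mod_cast card_filter_absNorm_under_le hT p) (hg p)

end PrimesOver

section Eisenstein

variable {R A : Type*} [CommRing R] [CommRing A] [Algebra R A]

theorem exists_eq_X_pow_add_C_mul {f : R[X]} (hf : f.Monic) {p : R}
    (h : ∀ k < f.natDegree, p ∣ f.coeff k) : ∃ g, f = X ^ f.natDegree + C p * g := by
  obtain ⟨g, hg⟩ : C p ∣ f - X ^ f.natDegree := (C_dvd_iff_dvd_coeff _ _).2 fun k ↦ by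
    rw [coeff_sub, coeff_X_pow]
    rcases lt_trichotomy k f.natDegree with hk | rfl | hk
    · simpa [hk.ne] using h k hk
    · simp [hf.coeff_natDegree]
    · simp [hk.ne', coeff_eq_zero_of_natDegree_lt hk]
  exact ⟨g, eq_add_of_sub_eq' hg⟩

theorem aeval_mem_iff_algebraMap_coeff_zero_mem {P : Ideal A} {α : A} (hα : α ∈ P) (g : R[X]) :
    aeval α g ∈ P ↔ algebraMap R A (g.coeff 0) ∈ P := by
  conv_lhs => rw [← divX_mul_X_add g, map_add, map_mul, aeval_X, aeval_C]
  exact P.add_mem_iff_right (P.mul_mem_left _ hα)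

theorem mem_pow_natDegree_of_isEisensteinAt [IsDedekindDomain A] {p : R} {P : Ideal A} [P.IsPrime]
    [P.LiesOver (Ideal.span {p})] {f : R[X]} (hf : f.Monic) (hE : f.IsEisensteinAt (Ideal.span {p}))
    {α : A} (hα : aeval α f = 0) : algebraMap R A p ∈ P ^ f.natDegree := by
  rcases eq_or_ne f.natDegree 0 with hn | hn
  · simp [hn]
  have hmem (x : R) : algebraMap R A x ∈ P ↔ x ∈ Ideal.span {p} :=
    (Ideal.mem_of_liesOver P (Ideal.span {p}) x).symm
  have hpP : algebraMap R A p ∈ P := (hmem p).2 (Ideal.mem_span_singleton_self p)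
  obtain ⟨g, hg⟩ := exists_eq_X_pow_add_C_mul hf
    fun k hk ↦ Ideal.mem_span_singleton.1 (hE.mem hk)
  have hpow : aeval α g * algebraMap R A p = -α ^ f.natDegree := by
    rw [hg, map_add, map_mul, map_pow, aeval_X, aeval_C] at hα
    linear_combination hα
  have hαP : α ∈ P := by
    refine Ideal.IsPrime.mem_of_pow_mem ‹_› f.natDegree (neg_mem_iff.1 ?_)
    exact hpow ▸ P.mul_mem_left _ hpP
  have hgP : aeval α g ∉ P := by
    rw [aeval_mem_iff_algebraMap_coeff_zero_mem hαP, hmem]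
    intro hg0
    apply hE.notMem
    rw [hg, coeff_add, coeff_C_mul, coeff_X_pow, if_neg hn.symm, zero_add, pow_two]
    exact Ideal.mul_mem_mul (Ideal.mem_span_singleton_self p) hg0
  refine (Ideal.IsPrime.mul_mem_pow P ?_).resolve_left hgP
  rw [hpow]
  exact neg_mem (Ideal.pow_mem_pow hαP _)

end Eisenstein

section Splitting

theorem natCast_mem_of_liesOver {S : Type*} [CommRing S] {p : ℕ} (P : Ideal S)
    [P.LiesOver (Ideal.span {(p : ℤ)})] : (p : S) ∈ P := by
  simpa using (Ideal.mem_of_liesOver P (Ideal.span {(p : ℤ)}) (p : ℤ)).1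
    (Ideal.mem_span_singleton_self _)

theorem card_pow_natDegree_le_card_of_irreducible {k A : Type*} [Field k] [CommRing A]
    [Nontrivial A] [Algebra k A] [Finite A] {f : k[X]} (hf : Irreducible f) {x : A}
    (hx : aeval x f = 0) : Nat.card k ^ f.natDegree ≤ Nat.card A := by
  have : Module.Finite k A := Module.Finite.of_finite
  have : Finite k := Finite.of_injective _ (algebraMap k A).injective
  rw [Module.natCard_eq_pow_finrank (K := k) (V := A)]
  refine Nat.pow_le_pow_right Nat.card_pos ?_
  rw [← natDegree_mul_leadingCoeff_inv f hf.ne_zero, minpoly.eq_of_irreducible hf hx]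
  exact minpoly.natDegree_le x

variable {K : Type*} [Field K] [NumberField K] {p : ℕ} {P : Ideal (𝓞 K)} {f : ℤ[X]} {α : 𝓞 K}

theorem absNorm_eq_of_isEisensteinAt (hp : p.Prime) (hP : Prime P)
    [P.LiesOver (Ideal.span {(p : ℤ)})] (hf : f.Monic) (hdeg : f.natDegree = finrank ℚ K)
    (hE : f.IsEisensteinAt (Ideal.span {(p : ℤ)})) (hα : aeval α f = 0) :
    Ideal.absNorm P = p := by
  have := Ideal.isPrime_of_prime hP
  have hdvd : Ideal.absNorm P ^ finrank ℚ K ∣ p ^ finrank ℚ K := by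
    rw [← map_pow]
    apply absNorm_dvd_pow_finrank
    simpa [hdeg] using mem_pow_natDegree_of_isEisensteinAt (P := P) hf hE hα
  refine ((Nat.dvd_prime hp).1 ((Nat.pow_dvd_pow_iff finrank_pos.ne').1 hdvd)).resolve_left ?_
  exact (one_lt_two.trans_le (two_le_absNorm hP)).ne'

theorem absNorm_eq_pow_of_irreducible_map (hp : p.Prime) (hP : Prime P)
    [P.LiesOver (Ideal.span {(p : ℤ)})] (hf : f.Monic) (hdeg : f.natDegree = finrank ℚ K)
    (hirr : Irreducible (f.map (Int.castRingHom (ZMod p)))) (hα : aeval α f = 0) :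
    Ideal.absNorm P = p ^ finrank ℚ K := by
  have := Fact.mk hp
  have := Ideal.Quotient.nontrivial_iff.2 (Ideal.isPrime_of_prime hP).ne_top
  have hpP : ((p : ℕ) : 𝓞 K ⧸ P) = 0 := by
    rw [← map_natCast (Ideal.Quotient.mk P)]
    exact Ideal.Quotient.eq_zero_iff_mem.2 (natCast_mem_of_liesOver P)
  have : CharP (𝓞 K ⧸ P) p := CharP.ringChar_of_prime_eq_zero hp hpP ▸ ringChar.charP _
  let _ : Algebra (ZMod p) (𝓞 K ⧸ P) := ZMod.algebra _ p
  have := Ideal.finiteQuotientOfFreeOfNeBot P hP.ne_zero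
  have hroot : aeval (Ideal.Quotient.mk P α) (f.map (Int.castRingHom (ZMod p))) = 0 := by
    rw [← algebraMap_int_eq, aeval_map_algebraMap]
    exact (aeval_algebraMap_apply (𝓞 K ⧸ P) α f).trans (by rw [hα, map_zero])
  refine (Nat.le_of_dvd (pow_pos hp.pos _)
    (absNorm_dvd_pow_finrank (natCast_mem_of_liesOver P))).antisymm ?_
  have hcard := card_pow_natDegree_le_card_of_irreducible hirr hroot
  rwa [hf.natDegree_map, hdeg, Nat.card_zmod] at hcard

end Splitting

section Polynomials

theorem exists_monic_forall_coeff_sub_mem {R ι : Type*} [CommRing R] [Nontrivial R] [Finite ι]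
    {I : ι → Ideal R} (hI : Pairwise (Function.onFun IsCoprime I)) (g : ι → R[X]) (n : ℕ) :
    ∃ f : R[X], f.Monic ∧ f.natDegree = n ∧
      ∀ i, ∀ k < n, f.coeff k - (g i).coeff k ∈ I i := by
  classical
  choose c hc using fun k : Fin n ↦ Ideal.exists_forall_sub_mem_ideal hI fun i ↦ (g i).coeff k
  have hdeg : (ofFn n c).degree < n := ofFn_degree_lt c
  refine ⟨X ^ n + ofFn n c, monic_X_pow_add hdeg, ?_, fun i k hk ↦ ?_⟩
  · rw [natDegree_add_eq_left_of_degree_lt (by rwa [degree_X_pow]), natDegree_X_pow]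
  · rw [coeff_add, coeff_X_pow, if_neg hk.ne, zero_add, ofFn_coeff_eq_val_of_lt c hk]
    exact hc ⟨k, hk⟩ i

theorem isEisensteinAt_of_coeff_sub_mem_sq {R : Type*} [CommRing R] {𝔭 : Ideal R} {f g : R[X]}
    (hg : g.IsEisensteinAt 𝔭) (hg0 : g.natDegree ≠ 0) (hf : f.Monic)
    (hdeg : f.natDegree = g.natDegree)
    (h : ∀ k < g.natDegree, f.coeff k - g.coeff k ∈ 𝔭 ^ 2) : f.IsEisensteinAt 𝔭 where
  leading hmem := by
    rw [hf.leadingCoeff] at hmem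
    exact hg.leading ((Ideal.eq_top_iff_one 𝔭).2 hmem ▸ Submodule.mem_top)
  mem {k} hk := by
    rw [hdeg] at hk
    exact (𝔭.sub_mem_iff_left (hg.mem hk)).1 (Ideal.pow_le_self two_ne_zero (h k hk))
  notMem hmem := hg.notMem ((Submodule.sub_mem_iff_right _ hmem).1 (h 0 hg0.bot_lt))

theorem map_eq_map_of_coeff_sub_mem_ker {R S : Type*} [CommRing R] [CommRing S] (φ : R →+* S)
    {f g : R[X]} (hf : f.Monic) (hg : g.Monic) (hdeg : f.natDegree = g.natDegree)
    (h : ∀ k < g.natDegree, f.coeff k - g.coeff k ∈ RingHom.ker φ) : f.map φ = g.map φ := by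
  ext k
  rw [coeff_map, coeff_map]
  rcases lt_trichotomy k g.natDegree with hk | rfl | hk
  · exact RingHom.sub_mem_ker_iff φ |>.1 (h k hk)
  · rw [hg.coeff_natDegree, ← hdeg, hf.coeff_natDegree]
  · rw [coeff_eq_zero_of_natDegree_lt hk, coeff_eq_zero_of_natDegree_lt (hdeg ▸ hk)]

theorem isEisensteinAt_X_pow_add_C {R : Type*} [CommRing R] [IsDomain R] {p : R} (hp : Prime p)
    {n : ℕ} (hn : n ≠ 0) : (X ^ n + C p).IsEisensteinAt (Ideal.span {p}) where
  leading := by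
    rw [(monic_X_pow_add_C p hn).leadingCoeff, Ideal.mem_span_singleton]
    exact hp.not_dvd_one
  mem {k} hk := by
    rw [natDegree_X_pow_add_C] at hk
    rw [coeff_add, coeff_X_pow, if_neg hk.ne, zero_add, coeff_C]
    split_ifs
    · exact Ideal.mem_span_singleton_self p
    · exact zero_mem _
  notMem := by
    rw [coeff_add, coeff_X_pow, if_neg hn.symm, zero_add, coeff_C_zero,
      Ideal.span_singleton_pow, Ideal.mem_span_singleton]
    exact fun h ↦ hp.not_isUnit (hp.irreducible.squarefree p (pow_two p ▸ h))

theorem exists_monic_irreducible_zmod {p n : ℕ} (hp : p.Prime) (hn : n ≠ 0) :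
    ∃ g : (ZMod p)[X], g.Monic ∧ g.natDegree = n ∧ Irreducible g := by
  have := Fact.mk hp
  obtain ⟨α, hα⟩ := Field.exists_primitive_element (ZMod p) (GaloisField p n)
  have hi : IsIntegral (ZMod p) α := Algebra.IsIntegral.isIntegral α
  refine ⟨minpoly (ZMod p) α, minpoly.monic hi, ?_, minpoly.irreducible hi⟩
  rw [← IntermediateField.adjoin.finrank hi, hα, IntermediateField.finrank_top',
    GaloisField.finrank p hn]

theorem exists_monic_irreducible_map_zmod {p n : ℕ} (hp : p.Prime) (hn : n ≠ 0) :
    ∃ g : ℤ[X], g.Monic ∧ g.natDegree = n ∧ Irreducible (g.map (Int.castRingHom (ZMod p))) := by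
  have := Fact.mk hp
  obtain ⟨g, hg, hdeg, hirr⟩ := exists_monic_irreducible_zmod hp hn
  obtain ⟨f, rfl, hfdeg, hf⟩ := lifts_and_natDegree_eq_and_monic
    (map_surjective _ (ZMod.ringHom_surjective (Int.castRingHom (ZMod p))) g) hg
  exact ⟨f, hf, hfdeg.trans hdeg, hirr⟩

theorem exists_monic_isEisensteinAt_irreducible_map {R U : Finset ℕ} (hR : ∀ p ∈ R, p.Prime)
    (hU : ∀ p ∈ U, p.Prime) (hRU : Disjoint R U) {n : ℕ} (hn : n ≠ 0) :
    ∃ f : ℤ[X], f.Monic ∧ f.natDegree = n ∧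
      (∀ p ∈ R, f.IsEisensteinAt (Ideal.span {(p : ℤ)})) ∧
      ∀ p ∈ U, Irreducible (f.map (Int.castRingHom (ZMod p))) := by
  classical
  have hprime (p : ↥(R ∪ U)) : (p : ℕ).Prime := (Finset.mem_union.1 p.2).elim (hR _) (hU _)
  choose g hg hgdeg hgirr using fun p : ↥(R ∪ U) ↦ exists_monic_irreducible_map_zmod (hprime p) hn
  have hcoprime : Pairwise (Function.onFun IsCoprime
      fun p : ↥(R ∪ U) ↦ Ideal.span {(p : ℤ)} ^ 2) := fun p q hpq ↦ by
    refine IsCoprime.pow (Ideal.isCoprime_span_singleton_iff _ _ |>.2 ?_)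
    exact Nat.isCoprime_iff_coprime.2
      ((Nat.coprime_primes (hprime p) (hprime q)).2 (Subtype.coe_ne_coe.2 hpq))
  obtain ⟨f, hf, hfdeg, hfg⟩ := exists_monic_forall_coeff_sub_mem hcoprime
    (fun p ↦ if (p : ℕ) ∈ R then X ^ n + C (p : ℤ) else g p) n
  refine ⟨f, hf, hfdeg, fun p hp ↦ ?_, fun p hp ↦ ?_⟩
  · have h := hfg ⟨p, Finset.mem_union_left U hp⟩
    simp only [hp, if_true] at h
    refine isEisensteinAt_of_coeff_sub_mem_sq
      (isEisensteinAt_X_pow_add_C (Nat.prime_iff_prime_int.1 (hR p hp)) hn) ?_ hf ?_ ?_ <;>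
    rwa [natDegree_X_pow_add_C]
  · have h := hfg ⟨p, Finset.mem_union_right R hp⟩
    simp only [Finset.disjoint_right.1 hRU hp, if_false] at h
    rw [map_eq_map_of_coeff_sub_mem_ker _ hf (hg ⟨p, Finset.mem_union_right R hp⟩)]
    · exact hgirr ⟨p, Finset.mem_union_right R hp⟩
    · rw [hfdeg, hgdeg]
    · intro k hk
      rw [ZMod.ker_intCastRingHom]
      exact Ideal.pow_le_self two_ne_zero (h k (hgdeg _ ▸ hk))

end Polynomials

section NumberFields

theorem exists_numberField_root {f : ℚ[X]} (hf : Irreducible f) :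
    ∃ (K : Type) (_ : Field K) (_ : NumberField K),
      finrank ℚ K = f.natDegree ∧ ∃ x : K, aeval x f = 0 := by
  have := Fact.mk hf
  let B := AdjoinRoot.powerBasis hf.ne_zero
  have hchar : CharZero (AdjoinRoot f) :=
    charZero_of_injective_algebraMap (algebraMap ℚ (AdjoinRoot f)).injective
  have hnf : NumberField (AdjoinRoot f) :=
    { to_charZero := hchar, to_finiteDimensional := by convert B.finite }
  refine ⟨AdjoinRoot f, inferInstance, hnf, ?_, AdjoinRoot.root f, ?_⟩
  · convert B.finrank
    exact (AdjoinRoot.powerBasis_dim hf.ne_zero).symm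
  · exact (eval₂_congr (Subsingleton.elim _ _) rfl rfl).trans (AdjoinRoot.eval₂_root f)

theorem exists_numberField_aeval_eq_zero {f : ℤ[X]} (hf : f.Monic) (hirr : Irreducible f) :
    ∃ (K : Type) (_ : Field K) (_ : NumberField K),
      finrank ℚ K = f.natDegree ∧ ∃ α : 𝓞 K, aeval α f = 0 := by
  obtain ⟨K, _, _, hK, x, hx⟩ := exists_numberField_root
    (hf.irreducible_iff_irreducible_map_fraction_map (K := ℚ).1 hirr)
  rw [aeval_map_algebraMap] at hx
  let α : 𝓞 K := ⟨x, f, hf, hx⟩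
  refine ⟨K, inferInstance, inferInstance, hK.trans (hf.natDegree_map _), α, ?_⟩
  apply RingOfIntegers.coe_injective
  rw [map_zero, ← aeval_algebraMap_apply]
  exact hx

theorem exists_numberField_absNorm_eq (S : Set ℕ) (B : ℕ) {n : ℕ} (hn : n ≠ 0) :
    ∃ (K : Type) (_ : Field K) (_ : NumberField K), finrank ℚ K = n ∧
      ∀ P : Ideal (𝓞 K), Prime P → Ideal.absNorm (P.under ℤ) ≤ B →
        (Ideal.absNorm (P.under ℤ) ∈ S → Ideal.absNorm P = Ideal.absNorm (P.under ℤ)) ∧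
        (Ideal.absNorm (P.under ℤ) ∉ S → Ideal.absNorm P = Ideal.absNorm (P.under ℤ) ^ n) := by
  classical
  -- Forcing one more prime to ramify makes Eisenstein's criterion apply even when `S` is empty.
  obtain ⟨p₀, hBp₀, hp₀⟩ := Nat.exists_infinite_primes (B + 1)
  let R := insert p₀ ((Nat.primesLE B).filter (· ∈ S))
  let U := (Nat.primesLE B).filter (· ∉ S)
  have hR : ∀ p ∈ R, p.Prime := by
    simpa [R, hp₀] using fun p hp _ ↦ Nat.prime_of_mem_primesLE hp
  have hU : ∀ p ∈ U, p.Prime := fun p hp ↦ Nat.prime_of_mem_primesLE (Finset.mem_filter.1 hp).1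
  have hRU : Disjoint R U := by
    refine Finset.disjoint_insert_left.2 ⟨fun hmem ↦ ?_, Finset.disjoint_filter_filter_not ..⟩
    exact (Nat.le_of_mem_primesLE (Finset.mem_filter.1 hmem).1).not_gt hBp₀
  obtain ⟨f, hf, hdeg, hE, hirr⟩ := exists_monic_isEisensteinAt_irreducible_map hR hU hRU hn
  have hp₀' := Nat.prime_iff_prime_int.1 hp₀
  have hfirr : Irreducible f := (hE p₀ (Finset.mem_insert_self _ _)).irreducible
    ((Ideal.span_singleton_prime hp₀'.ne_zero).2 hp₀') hf.isPrimitive (hdeg ▸ hn.bot_lt)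
  obtain ⟨K, _, _, hK, α, hα⟩ := exists_numberField_aeval_eq_zero hf hfirr
  refine ⟨K, inferInstance, inferInstance, hK.trans hdeg, fun P hP hPB ↦ ?_⟩
  have hp := prime_absNorm_under hP
  have hmem := Nat.mem_primesLE.2 ⟨hPB, hp⟩
  refine ⟨fun hPS ↦ ?_, fun hPS ↦ ?_⟩
  · have hPR : Ideal.absNorm (P.under ℤ) ∈ R :=
      Finset.mem_insert_of_mem (Finset.mem_filter.2 ⟨hmem, hPS⟩)
    exact absNorm_eq_of_isEisensteinAt hp hP hf hK.symm (hE _ hPR) hα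
  · have hPU : Ideal.absNorm (P.under ℤ) ∈ U := Finset.mem_filter.2 ⟨hmem, hPS⟩
    rw [absNorm_eq_pow_of_irreducible_map hp hP hf hK.symm (hirr _ hPU) hα, hK, hdeg]

end NumberFields

section Parameters

theorem eventually_sum_indicator_Ioi_le {f : ℕ → ℝ} (hf : Summable f) {ε : ℝ} (hε : 0 < ε) :
    ∀ᶠ N in atTop, ∀ F : Finset ℕ, ∑ p ∈ F, (Set.Ioi N).indicator f p ≤ ε := by
  classical
  obtain ⟨S, hS⟩ := summable_iff_vanishing_norm.1 hf ε hε
  filter_upwards [eventually_ge_atTop (S.sup id)] with N hN F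
  have hdisj : Disjoint (F.filter (· ∈ Set.Ioi N)) S := Finset.disjoint_left.2 fun p hp hpS ↦
    ((Finset.le_sup (f := id) hpS).trans hN).not_gt (Finset.mem_filter.1 hp).2
  simp only [Set.indicator_apply, ← Finset.sum_filter]
  exact (le_abs_self _).trans (hS _ hdisj).le

theorem sum_indicator_image_le {ι κ : Type*} {f : κ → ℝ} (hf : ∀ k, 0 ≤ f k) (q : ι → κ)
    (J : Finset ι) (F : Finset κ) :
    ∑ k ∈ F, (q '' J).indicator f k ≤ ∑ j ∈ J, f (q j) := by
  classical
  calc ∑ k ∈ F, (q '' J).indicator f k = ∑ k ∈ F.filter (· ∈ q '' J), f k := by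
        simp only [Set.indicator_apply, Finset.sum_filter]
    _ ≤ ∑ k ∈ J.image q, f k := by
        refine Finset.sum_le_sum_of_subset_of_nonneg (fun k hk ↦ ?_) fun k _ _ ↦ hf k
        simpa using (Finset.mem_filter.1 hk).2
    _ ≤ ∑ j ∈ J, f (q j) := Finset.sum_image_le_of_nonneg fun k _ ↦ hf k

theorem sum_indicator_Ioi_pow_rpow_neg_le {r : ℝ} (hr : 0 ≤ r) {s : ℕ} (hs : 2 ≤ s) {X : ℕ}
    (hX : 0 < X) (F : Finset ℕ) :
    ∑ p ∈ F, (Set.Ioi X).indicator (fun p : ℕ ↦ ((p ^ s : ℕ) : ℝ) ^ (-r)) p ≤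
      (X : ℝ) ^ (-r) * ∑ p ∈ F, (Set.Ioi X).indicator (fun p : ℕ ↦ (p : ℝ) ^ (-r)) p := by
  rw [Finset.mul_sum]
  refine Finset.sum_le_sum fun p _ ↦ ?_
  by_cases hp : p ∈ Set.Ioi X
  · have hXp : X < p := hp
    rw [Set.indicator_of_mem hp, Set.indicator_of_mem hp,
      ← Real.mul_rpow (Nat.cast_nonneg _) (Nat.cast_nonneg _)]
    refine Real.rpow_le_rpow_of_nonpos (mod_cast Nat.mul_pos hX (hX.trans hXp)) ?_ (by linarith)
    have hle : X * p ≤ p ^ s := calc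
      X * p ≤ p ^ 2 := by nlinarith
      _ ≤ p ^ s := Nat.pow_le_pow_right (hX.trans hXp) hs
    exact_mod_cast hle
  · simp [Set.indicator_of_notMem hp]

theorem exists_prime_chain {L X : ℕ} (hL : L ≠ 0) (hX : X ≠ 0) :
    ∃ q : ℕ → ℕ, (∀ i, (q i).Prime) ∧ (∀ i, X < q i) ∧ (∀ i, q i ≤ (2 * L) ^ (i + 1) * X) ∧
      ∀ i, L * q i < q (i + 1) := by
  choose! next hprime hlt hle using Nat.exists_prime_lt_and_le_two_mul
  let q (i : ℕ) : ℕ := (fun n ↦ next (L * n))^[i] (next X)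
  have hsucc (i : ℕ) : q (i + 1) = next (L * q i) := Function.iterate_succ_apply' ..
  have hq (i : ℕ) : (q i).Prime ∧ X < q i ∧ q i ≤ (2 * L) ^ (i + 1) * X := by
    induction i with
    | zero =>
      refine ⟨hprime X hX, hlt X hX, (hle X hX).trans (Nat.mul_le_mul_right X ?_)⟩
      rw [zero_add, pow_one]
      exact Nat.le_mul_of_pos_right 2 hL.bot_lt
    | succ i ih =>
      obtain ⟨hp, hXq, hqX⟩ := ih
      have hne : L * q i ≠ 0 := mul_ne_zero hL hp.ne_zero
      rw [hsucc]
      refine ⟨hprime _ hne, ?_, ?_⟩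
      · exact hXq.trans ((Nat.le_mul_of_pos_left _ hL.bot_lt).trans_lt (hlt _ hne))
      · calc next (L * q i) ≤ 2 * (L * q i) := hle _ hne
          _ ≤ 2 * (L * ((2 * L) ^ (i + 1) * X)) := by gcongr
          _ = (2 * L) ^ (i + 1 + 1) * X := by ring
  refine ⟨q, fun i ↦ (hq i).1, fun i ↦ (hq i).2.1, fun i ↦ (hq i).2.2, fun i ↦ ?_⟩
  rw [hsucc]
  exact hlt _ (mul_ne_zero hL (hq i).1.ne_zero)

theorem sum_Ioo_rpow_neg_le {r : ℝ} (hr : 1 ≤ r) {L : ℕ} (hL : L ≠ 0) {q : ℕ → ℕ}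
    (hpos : ∀ i, 0 < q i) (hq : ∀ i, L * q i ≤ q (i + 1)) (i M : ℕ) :
    ∑ j ∈ Finset.Ioo i M, (q j : ℝ) ^ (-r) ≤ M / L * (q i : ℝ) ^ (-r) := by
  have hmono : Monotone q := monotone_nat_of_le_succ fun i ↦
    (Nat.le_mul_of_pos_left _ hL.bot_lt).trans (hq i)
  have hL1 : (1 : ℝ) ≤ L := mod_cast hL.bot_lt
  have hterm : ∀ j ∈ Finset.Ioo i M, (q j : ℝ) ^ (-r) ≤ (L : ℝ)⁻¹ * (q i : ℝ) ^ (-r) := by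
    intro j hj
    have hij : L * q i ≤ q j := (hq i).trans (hmono (Finset.mem_Ioo.1 hj).1)
    calc (q j : ℝ) ^ (-r) ≤ (L * q i : ℝ) ^ (-r) :=
          Real.rpow_le_rpow_of_nonpos (mod_cast Nat.mul_pos hL.bot_lt (hpos i))
            (mod_cast hij) (by linarith)
      _ = (L : ℝ) ^ (-r) * (q i : ℝ) ^ (-r) :=
          Real.mul_rpow (Nat.cast_nonneg _) (Nat.cast_nonneg _)
      _ ≤ (L : ℝ)⁻¹ * (q i : ℝ) ^ (-r) := by
          rw [← Real.rpow_neg_one (L : ℝ)]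
          gcongr
  have hcard : (Finset.Ioo i M).card ≤ M := by
    rw [Nat.card_Ioo]
    omega
  calc _ ≤ (Finset.Ioo i M).card • ((L : ℝ)⁻¹ * (q i : ℝ) ^ (-r)) :=
        Finset.sum_le_card_nsmul _ _ _ hterm
    _ ≤ M * ((L : ℝ)⁻¹ * (q i : ℝ) ^ (-r)) := by
        rw [nsmul_eq_mul]
        gcongr
    _ = M / L * (q i : ℝ) ^ (-r) := by ring

theorem exists_strictMono_primes_sum_le {r : ℝ} (hr : 1 < r) {s : ℕ} (hs : 2 ≤ s) {C : ℝ}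
    (hC : 0 < C) (M : ℕ) :
    ∃ (X : ℕ) (q : ℕ → ℕ), StrictMono q ∧ (∀ i, (q i).Prime) ∧ (∀ i, X < q i) ∧
      ∀ i < M, C * ∑ j ∈ Finset.Ioo i M, (q j : ℝ) ^ (-r) ≤ (q i : ℝ) ^ (-r) ∧
        ∀ F : Finset ℕ, C * ∑ p ∈ F,
          (Set.Ioi X).indicator (fun p : ℕ ↦ ((p ^ s : ℕ) : ℝ) ^ (-r)) p ≤ (q i : ℝ) ^ (-r) := by
  obtain ⟨L, hL⟩ := exists_nat_gt (C * M)
  have hL0 : (0 : ℝ) < L := lt_of_le_of_lt (by positivity) hL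
  have hL' : L ≠ 0 := Nat.cast_ne_zero.1 hL0.ne'
  let D : ℕ := (2 * L) ^ M
  have hD : (0 : ℝ) < D := by positivity
  obtain ⟨X, hX0, hX⟩ := ((eventually_ne_atTop 0).and (eventually_sum_indicator_Ioi_le
    (Real.summable_nat_rpow.2 (neg_lt_neg hr)) (ε := (D : ℝ) ^ (-r) / C) (by positivity))).exists
  obtain ⟨q, hprime, hXq, hle, hchain⟩ := exists_prime_chain hL' hX0
  refine ⟨X, q, strictMono_nat_of_lt_succ fun i ↦ ?_, hprime, hXq, fun i hi ↦ ⟨?_, fun F ↦ ?_⟩⟩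
  · exact (Nat.le_mul_of_pos_left _ hL'.bot_lt).trans_lt (hchain i)
  · calc C * ∑ j ∈ Finset.Ioo i M, (q j : ℝ) ^ (-r) ≤ C * (M / L * (q i : ℝ) ^ (-r)) := by
          gcongr
          exact sum_Ioo_rpow_neg_le hr.le hL' (fun i ↦ (hprime i).pos) (fun i ↦ (hchain i).le) i M
      _ = C * M / L * (q i : ℝ) ^ (-r) := by ring
      _ ≤ (q i : ℝ) ^ (-r) :=
          mul_le_of_le_one_left (by positivity) ((div_le_one hL0).2 hL.le)
  · have hqD : q i ≤ X * D := (hle i).trans <| by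
      rw [mul_comm]
      exact Nat.mul_le_mul_left X (Nat.pow_le_pow_right (by lia) hi)
    calc _ ≤ C * ((X : ℝ) ^ (-r) * ((D : ℝ) ^ (-r) / C)) := by
          gcongr
          refine (sum_indicator_Ioi_pow_rpow_neg_le (by linarith) hs hX0.bot_lt F).trans ?_
          gcongr
          exact hX F
      _ = (X * D : ℝ) ^ (-r) := by
          rw [Real.mul_rpow (Nat.cast_nonneg _) (Nat.cast_nonneg _)]
          field_simp
      _ ≤ (q i : ℝ) ^ (-r) :=
          Real.rpow_le_rpow_of_nonpos (mod_cast (hprime i).pos) (mod_cast hqD) (by linarith)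

end Parameters

section Construction

variable {K : Type*} [Field K] [NumberField K] {r : ℝ}

theorem absNorm_under_le_absNorm {P : Ideal (𝓞 K)} (hP : P ≠ 0) :
    Ideal.absNorm (P.under ℤ) ≤ Ideal.absNorm P :=
  Nat.le_of_dvd (Nat.pos_of_ne_zero (Ideal.absNorm_eq_zero_iff.not.2 hP))
    (Int.absNorm_under_dvd_absNorm P)

variable (K) in
theorem exists_prime_absNorm_under_eq {p : ℕ} (hp : p.Prime) :
    ∃ P : Ideal (𝓞 K), Prime P ∧ Ideal.absNorm (P.under ℤ) = p := by
  have hp' := Nat.prime_iff_prime_int.1 hp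
  have : (Ideal.span {(p : ℤ)}).IsPrime := (Ideal.span_singleton_prime hp'.ne_zero).2 hp'
  obtain ⟨P, hP⟩ := Ideal.nonempty_primesOver (S := 𝓞 K) (Ideal.span {(p : ℤ)})
  refine ⟨P, Ideal.prime_of_mem_primesOver (Ideal.span_singleton_eq_bot.not.2 hp'.ne_zero) hP, ?_⟩
  rw [← hP.2.over]
  simp

theorem sparseAbove_of_absNorm_rpow_neg_le {q : ℕ} {g : ℕ → ℝ} (hg : ∀ p, 0 ≤ g p)
    (hle : ∀ P : Ideal (𝓞 K), Prime P → q < Ideal.absNorm P →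
      (Ideal.absNorm P : ℝ) ^ (-r) ≤ g (Ideal.absNorm (P.under ℤ)))
    (hsum : ∀ F : Finset ℕ, 8 * finrank ℚ K * ∑ p ∈ F, g p ≤ (q : ℝ) ^ (-r)) :
    SparseAbove K r q := by
  intro T hT
  calc 8 * ∑ P ∈ T, (Ideal.absNorm P : ℝ) ^ (-r)
      ≤ 8 * ∑ P ∈ T, g (Ideal.absNorm (P.under ℤ)) := by
        gcongr with P hP
        exact hle P (hT P hP).1 (hT P hP).2
    _ ≤ 8 * (finrank ℚ K * ∑ p ∈ T.image fun P ↦ Ideal.absNorm (P.under ℤ), g p) := by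
        gcongr
        exact sum_absNorm_under_le (fun P hP ↦ (hT P hP).1) hg
    _ ≤ (q : ℝ) ^ (-r) := by
        rw [← mul_assoc]
        exact hsum _

theorem sparseAbove_of_mem_or_mem_or_mem (hr : 0 ≤ r) {q s : ℕ} {A B D : Set ℕ}
    (h : ∀ P : Ideal (𝓞 K), Prime P → q < Ideal.absNorm P → Ideal.absNorm (P.under ℤ) ∈ A ∨
      Ideal.absNorm (P.under ℤ) ∈ B ∨
        Ideal.absNorm (P.under ℤ) ∈ D ∧ Ideal.absNorm P = Ideal.absNorm (P.under ℤ) ^ s)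
    (hA : ∀ F : Finset ℕ, 24 * finrank ℚ K *
      ∑ p ∈ F, A.indicator (fun p : ℕ ↦ (p : ℝ) ^ (-r)) p ≤ (q : ℝ) ^ (-r))
    (hB : ∀ F : Finset ℕ, 24 * finrank ℚ K *
      ∑ p ∈ F, B.indicator (fun p : ℕ ↦ (p : ℝ) ^ (-r)) p ≤ (q : ℝ) ^ (-r))
    (hD : ∀ F : Finset ℕ, 24 * finrank ℚ K *
      ∑ p ∈ F, D.indicator (fun p : ℕ ↦ ((p ^ s : ℕ) : ℝ) ^ (-r)) p ≤ (q : ℝ) ^ (-r)) :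
    SparseAbove K r q := by
  let u (p : ℕ) : ℝ := (p : ℝ) ^ (-r)
  let v (p : ℕ) : ℝ := ((p ^ s : ℕ) : ℝ) ^ (-r)
  have hA0 (p : ℕ) : 0 ≤ A.indicator u p := Set.indicator_nonneg (fun _ _ ↦ by positivity) p
  have hB0 (p : ℕ) : 0 ≤ B.indicator u p := Set.indicator_nonneg (fun _ _ ↦ by positivity) p
  have hD0 (p : ℕ) : 0 ≤ D.indicator v p := Set.indicator_nonneg (fun _ _ ↦ by positivity) p
  have hbelow {P : Ideal (𝓞 K)} (hP : Prime P) :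
      (Ideal.absNorm P : ℝ) ^ (-r) ≤ u (Ideal.absNorm (P.under ℤ)) :=
    Real.rpow_le_rpow_of_nonpos (mod_cast (prime_absNorm_under hP).pos)
      (mod_cast absNorm_under_le_absNorm hP.ne_zero) (by linarith)
  refine sparseAbove_of_absNorm_rpow_neg_le
    (g := fun p ↦ A.indicator u p + B.indicator u p + D.indicator v p)
    (fun p ↦ add_nonneg (add_nonneg (hA0 p) (hB0 p)) (hD0 p))
    (fun P hP hPq ↦ ?_) fun F ↦ ?_
  · set p := Ideal.absNorm (P.under ℤ)
    rcases h P hP hPq with hPA | hPB | ⟨hPD, hPs⟩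
    · linarith [hbelow hP, Set.indicator_of_mem hPA u, hB0 p, hD0 p]
    · linarith [hbelow hP, Set.indicator_of_mem hPB u, hA0 p, hD0 p]
    · have hv : v p = (Ideal.absNorm P : ℝ) ^ (-r) := by rw [hPs]
      linarith [Set.indicator_of_mem hPD v, hA0 p, hB0 p]
  · simp only [Finset.sum_add_distrib]
    linarith [hA F, hB F, hD F]

theorem exists_numberField_sparseAbove (hr : 1 < r) {s : ℕ} (hs : 2 ≤ s) (M : ℕ) :
    ∃ (K : Type) (_ : Field K) (_ : NumberField K) (q : Fin M → ℕ), finrank ℚ K = s ∧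
      Function.Injective q ∧ (∀ i, ∃ P : Ideal (𝓞 K), Prime P ∧ Ideal.absNorm P = q i) ∧
      ∀ i, SparseAbove K r (q i) := by
  have hC : (0 : ℝ) < 24 * s := by positivity
  obtain ⟨X, q, hq, hprime, hXq, hsum⟩ := exists_strictMono_primes_sum_le hr hs hC M
  obtain ⟨B, hB⟩ : ∃ B, ∀ i < M, q i ≤ B ∧ ∀ F : Finset ℕ,
      ∑ p ∈ F, (Set.Ioi B).indicator (fun p : ℕ ↦ (p : ℝ) ^ (-r)) p ≤
        (q i : ℝ) ^ (-r) / (24 * s) :=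
    ((eventually_all_finite (Set.finite_lt_nat M)).2 fun i _ ↦
      (eventually_ge_atTop (q i)).and (eventually_sum_indicator_Ioi_le
        (Real.summable_nat_rpow.2 (neg_lt_neg hr))
        (div_pos (Real.rpow_pos_of_pos (mod_cast (hprime i).pos) _) hC))).exists
  obtain ⟨K, _, _, rfl, hK⟩ :=
    exists_numberField_absNorm_eq (Set.Iic X ∪ q '' Set.Iio M) B (by lia : s ≠ 0)
  refine ⟨K, inferInstance, inferInstance, fun i ↦ q i, rfl, hq.injective.comp Fin.val_injective,
    fun i ↦ ?_, fun i ↦ ?_⟩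
  · obtain ⟨P, hP, hPq⟩ := exists_prime_absNorm_under_eq K (hprime i)
    refine ⟨P, hP, ((hK P hP ?_).1 ?_).trans hPq⟩
    · exact hPq ▸ (hB i i.2).1
    · exact hPq ▸ Or.inr ⟨i, i.2, rfl⟩
  · refine sparseAbove_of_mem_or_mem_or_mem (s := finrank ℚ K) (A := q '' Finset.Ioo ↑i M)
      (B := Set.Ioi B) (D := Set.Ioi X) (by linarith) (fun P hP hPq ↦ ?_) (fun F ↦ ?_)
      (fun F ↦ ?_) (hsum i i.2).2
    · rcases lt_or_ge B (Ideal.absNorm (P.under ℤ)) with hPB | hPB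
      · exact Or.inr (Or.inl hPB)
      by_cases hPR : Ideal.absNorm (P.under ℤ) ∈ Set.Iic X ∪ q '' Set.Iio M
      · rw [(hK P hP hPB).1 hPR] at hPq
        rcases hPR with hPX | ⟨j, hj, hjP⟩
        · exact absurd hPX (not_le.2 ((hXq i).trans hPq))
        · exact Or.inl ⟨j, by simpa using ⟨hq.lt_iff_lt.1 (hjP ▸ hPq), hj⟩, hjP⟩
      · exact Or.inr (Or.inr ⟨Set.mem_Ioi.2 (not_le.1 fun h ↦ hPR (Or.inl h)), (hK P hP hPB).2 hPR⟩)
    · refine le_trans ?_ (hsum i i.2).1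
      gcongr
      exact sum_indicator_image_le (fun p ↦ by positivity) q _ F
    · rw [mul_comm]
      exact (le_div_iff₀ hC).1 ((hB i i.2).2 F)

end Construction

/-- For fixed real `r > 1` and integer `s ≥ 2`, the number of connected components of the
closure of the image of `σ_{r,K}` is unbounded as `K` ranges over degree-`s` extensions of
`ℚ`: for every `M` there is a degree-`s` number field `K` with at least `M` components. -/
theorem stmt5 (r : ℝ) (hr : 1 < r) (s : ℕ) (hs : 2 ≤ s) :
    ∀ M : ℕ, 0 < M →
      ∃ (K : Type) (_ : Field K) (_ : NumberField K),
        Module.finrank ℚ K = s ∧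
        (M : Cardinal) ≤ Cardinal.mk (ConnectedComponents
          ↥(closure (sigmaK K r '' {I : Ideal (𝓞 K) | I ≠ 0}))) := by
  intro M _
  obtain ⟨K, _, _, q, hK, hinj, hnorm, hsparse⟩ := exists_numberField_sparseAbove hr hs M
  refine ⟨K, inferInstance, inferInstance, hK, ?_⟩
  simpa using mk_le_mk_connectedComponents_of_sparseAbove hr.le hinj hnorm hsparse
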